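/- arXiv:2411.07266 — 3 statements merged into one kernel-verified Lean document; each statement's English description precedes it below -/
import Mathlib

section
/- For every n ≥ 4, the fan F_n = K_1 ∨ P_{n-1} on n vertices satisfies γ_MR(F_n) = 2⌈n/6⌉ − n + 3. -/
open Finset

namespace MRD

variable {V : Type*}

open scoped Classical

/-- Sum of `f` over the closed neighborhood of `v` in `G`:
`f(N[v]) = \sum_{u \in N[v]} f(u)`. -/
noncomputable def closedNbhdSum [Fintype V] (G : SimpleGraph V) (f : V → ℤ) (v : V) : ℤ :=
  ∑ u ∈ Finset.univ.filter (fun u => G.Adj v u ∨ u = v), f u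

/-- `f : V → {-1, 1, 2}` is a Majority Roman Dominating Function (MRDF) on `G`:
(i) `f(N[v]) ≥ 1` for at least half of the vertices, and (ii) every vertex with value `-1`
is adjacent to a vertex with value `2`. -/
noncomputable def IsMRDF [Fintype V] (G : SimpleGraph V) (f : V → ℤ) : Prop :=
  (∀ v, f v = -1 ∨ f v = 1 ∨ f v = 2) ∧
  Fintype.card V ≤ 2 * (Finset.univ.filter (fun v => 1 ≤ closedNbhdSum G f v)).card ∧
  (∀ u, f u = -1 → ∃ w, G.Adj u w ∧ f w = 2)

/-- The majority Roman domination number `γ_MR(G)`: the minimum weight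
`w(f) = ∑_v f(v)` over all MRDFs `f` on `G`. -/
noncomputable def mrdNum [Fintype V] (G : SimpleGraph V) : ℤ :=
  sInf {w : ℤ | ∃ f : V → ℤ, IsMRDF G f ∧ w = ∑ v, f v}

/-- The join `G ∨ H` of two simple graphs: disjoint union plus all edges between the parts. -/
def join {α β : Type*} (G : SimpleGraph α) (H : SimpleGraph β) : SimpleGraph (α ⊕ β) where
  Adj x y :=
    match x, y with
    | .inl a, .inl b => G.Adj a b
    | .inr a, .inr b => H.Adj a b
    | .inl _, .inr _ => True
    | .inr _, .inl _ => True
  symm := ⟨by rintro (a | a) (b | b) h <;> simp_all [SimpleGraph.adj_comm]⟩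
  loopless := ⟨by rintro (a | a) h <;> simp_all⟩

/-- The corona `G ∘ H` of two simple graphs: one copy of `G` and `|V(G)|` copies of `H`,
where the `v`-th vertex of `G` is joined to every vertex of the `v`-th copy of `H`. -/
def corona {α β : Type*} (G : SimpleGraph α) (H : SimpleGraph β) : SimpleGraph (α ⊕ α × β) where
  Adj x y :=
    match x, y with
    | .inl u, .inl v => G.Adj u v
    | .inr p, .inr q => p.1 = q.1 ∧ H.Adj p.2 q.2
    | .inl u, .inr p => u = p.1
    | .inr p, .inl u => u = p.1
  symm := ⟨by
    rintro (u | ⟨u, x⟩) (v | ⟨v, y⟩) h <;> simp_all [SimpleGraph.adj_comm, eq_comm]⟩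
  loopless := ⟨by rintro (u | ⟨u, x⟩) h <;> simp_all⟩

/-- `S` is a dominating set of `G`. -/
def IsDomSet (G : SimpleGraph V) (S : Finset V) : Prop :=
  ∀ v, v ∉ S → ∃ u ∈ S, G.Adj v u

/-- The domination number `γ(G)`. -/
noncomputable def domNum [Fintype V] (G : SimpleGraph V) : ℕ :=
  sInf {k | ∃ S : Finset V, IsDomSet G S ∧ S.card = k}

/-- A set of vertices is independent if no two of its vertices are adjacent. -/
def IsIndepSet (G : SimpleGraph V) (S : Finset V) : Prop :=
  ∀ a ∈ S, ∀ b ∈ S, ¬ G.Adj a b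

/-- The independence number `β₀(G)`. -/
noncomputable def indepNum [Fintype V] (G : SimpleGraph V) : ℕ :=
  sSup {k | ∃ S : Finset V, IsIndepSet G S ∧ S.card = k}

/-- The cocktail party graph `K_{2n} - M` (complete graph minus a perfect matching),
realized on `Fin n × Fin 2`: `(i,a)` and `(j,b)` are adjacent iff `i ≠ j`. -/
def cocktail (n : ℕ) : SimpleGraph (Fin n × Fin 2) where
  Adj x y := x.1 ≠ y.1
  symm := ⟨fun _ _ h => h.symm⟩
  loopless := ⟨fun _ h => h rfl⟩

end MRD

/-!
Let `f` label the cone `K₁ ∨ H` over a graph `H` with `m` vertices, all of degree `1` or `2`.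
The main tool is the double counting `∑ v, g(N[v]) = ∑ v, (deg v + 1) g(v)` on `H`. Suppose that
`f` has nonpositive weight, so that the hub does not count towards the majority.

If the hub has label `2`, a vertex of `H` can only count when its closed neighborhood in `H`
contains a positive label. So with `p` positive labels in `H` at most `3p` vertices count, whence
`m + 1 ≤ 6p`, and `f` has weight at least `2 + 2p - m`.

If the hub has another label, each `-1` in `H` has a neighbor in `H` labeled `2`, and each `2` has
at most two neighbors, so `H` has nonnegative weight. If this weight is `0`, every closed
neighborhood in `H` contains exactly one `2` and otherwise only `-1`, hence has sum at most `1`.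
The total weight being nonpositive, the hub is `-1`; as some vertex counts, `H` has weight `1`.
The total weight `0` is below the bound only for `m = 3`. In that case a `2` next to the hub leaves
two labels with sum `-1`, which is impossible.

On the path, equality is attained by labeling the hub `2`, the middle vertices of `⌈(m + 1)/6⌉`
consecutive triples `1`, and all other vertices `-1`.
-/

namespace MRD

open SimpleGraph

section Join

variable {V W : Type*} {G : SimpleGraph V} {H : SimpleGraph W}

@[simp]
lemma join_adj_inl_inl {a a' : V} : (join G H).Adj (.inl a) (.inl a') ↔ G.Adj a a' := Iff.rfl

@[simp]
lemma join_adj_inr_inr {b b' : W} : (join G H).Adj (.inr b) (.inr b') ↔ H.Adj b b' := Iff.rfl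

@[simp]
lemma join_adj_inl_inr (a : V) (b : W) : (join G H).Adj (.inl a) (.inr b) := trivial

@[simp]
lemma join_adj_inr_inl (b : W) (a : V) : (join G H).Adj (.inr b) (.inl a) := trivial

end Join

section ClosedNbhdSum

variable {V W : Type*} [Fintype V] [Fintype W] {G : SimpleGraph V} {H : SimpleGraph W}

lemma closedNbhdSum_eq_add_sum [DecidableRel G.Adj] (f : V → ℤ) (v : V) :
    closedNbhdSum G f v = f v + ∑ u ∈ G.neighborFinset v, f u := by
  classical
  rw [← sum_insert (G.notMem_neighborFinset_self v), closedNbhdSum]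
  exact sum_congr (by ext u; simp [or_comm]) fun _ _ ↦ rfl

lemma closedNbhdSum_mono {f g : V → ℤ} (hfg : f ≤ g) (v : V) :
    closedNbhdSum G f v ≤ closedNbhdSum G g v :=
  sum_le_sum fun u _ ↦ hfg u

lemma closedNbhdSum_const_mul_sub_const [DecidableRel G.Adj] (a b : ℤ) (f : V → ℤ) (v : V) :
    closedNbhdSum G (fun u ↦ a * f u - b) v =
      a * closedNbhdSum G f v - b * (G.degree v + 1) := by
  simp only [closedNbhdSum_eq_add_sum, sum_sub_distrib, ← mul_sum, sum_const,
    card_neighborFinset_eq_degree, nsmul_eq_mul]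
  ring

lemma one_le_closedNbhdSum_indicator {s : Set V} {u v : V} (hu : u ∈ s)
    (huv : G.Adj v u ∨ u = v) : 1 ≤ closedNbhdSum G (s.indicator 1) v := by
  calc (1 : ℤ) = s.indicator 1 u := by simp [hu]
    _ ≤ closedNbhdSum G (s.indicator 1) v :=
      single_le_sum (fun w _ ↦ Set.indicator_nonneg (by simp) w) (by simpa using huv)

lemma closedNbhdSum_nonneg {f : V → ℤ} (hf : 0 ≤ f) (v : V) : 0 ≤ closedNbhdSum G f v :=
  sum_nonneg fun u _ ↦ hf u

theorem sum_closedNbhdSum [DecidableRel G.Adj] (f : V → ℤ) :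
    ∑ v, closedNbhdSum G f v = ∑ v, (G.degree v + 1) * f v := by
  have hswap : ∑ v, ∑ u ∈ G.neighborFinset v, f u = ∑ u, ∑ _v ∈ G.neighborFinset u, f u :=
    sum_comm' fun v u ↦ by simp [G.adj_comm]
  simp only [closedNbhdSum_eq_add_sum, sum_add_distrib, hswap, sum_const,
    card_neighborFinset_eq_degree, nsmul_eq_mul, add_mul, one_mul]
  exact add_comm _ _

lemma sum_closedNbhdSum_le [DecidableRel G.Adj] {d : ℕ} (hdeg : ∀ v, G.degree v ≤ d)
    {f : V → ℤ} (hf : 0 ≤ f) : ∑ v, closedNbhdSum G f v ≤ (d + 1) * ∑ v, f v := by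
  rw [sum_closedNbhdSum, mul_sum]
  exact sum_le_sum fun v _ ↦
    mul_le_mul_of_nonneg_right (by exact_mod_cast Nat.succ_le_succ (hdeg v)) (hf v)

lemma closedNbhdSum_top (f : V → ℤ) (v : V) : closedNbhdSum ⊤ f v = ∑ u, f u :=
  sum_congr (by ext u; simpa [eq_comm] using ne_or_eq v u) fun _ _ ↦ rfl

lemma closedNbhdSum_join_inl (f : V ⊕ W → ℤ) (a : V) :
    closedNbhdSum (join G H) f (.inl a) = closedNbhdSum G (f ∘ .inl) a + ∑ b, f (.inr b) := by
  classical
  calc closedNbhdSum (join G H) f (.inl a)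
      = ∑ x ∈ disjSum {u | G.Adj a u ∨ u = a} univ, f x :=
        sum_congr (by ext (u | u) <;> simp) fun _ _ ↦ rfl
    _ = closedNbhdSum G (f ∘ .inl) a + ∑ b, f (.inr b) := sum_disjSum ..

lemma closedNbhdSum_join_inr (f : V ⊕ W → ℤ) (b : W) :
    closedNbhdSum (join G H) f (.inr b) = ∑ a, f (.inl a) + closedNbhdSum H (f ∘ .inr) b := by
  classical
  calc closedNbhdSum (join G H) f (.inr b)
      = ∑ x ∈ disjSum univ {u | H.Adj b u ∨ u = b}, f x :=
        sum_congr (by ext (u | u) <;> simp) fun _ _ ↦ rfl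
    _ = ∑ a, f (.inl a) + closedNbhdSum H (f ∘ .inr) b := sum_disjSum ..

end ClosedNbhdSum

section Labelings

variable {V : Type*} {G : SimpleGraph V} {f : V → ℤ}

/-- The conditions on an MRDF other than the majority condition: the labels are `-1`, `1`, `2`, and
each `-1` has a neighbor labeled `2`. Unlike an MRDF, such a labeling restricts from a cone
to its base whenever the hub is not labeled `2`. -/
structure IsRomanLabeling (G : SimpleGraph V) (f : V → ℤ) : Prop where
  label_mem (v : V) : f v = -1 ∨ f v = 1 ∨ f v = 2
  exists_adj_two (v : V) : f v = -1 → ∃ u, G.Adj v u ∧ f u = 2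

variable [Fintype V]

lemma sum_eq_three_mul_add_two_mul_sub_card (hval : ∀ v, f v = -1 ∨ f v = 1 ∨ f v = 2) :
    ∑ v, f v = 3 * #{v | f v = 2} + 2 * #{v | f v = 1} - Fintype.card V := by
  have hpoint (v : V) :
      f v = 3 * (if f v = 2 then 1 else 0) + 2 * (if f v = 1 then 1 else 0) - 1 := by
    rcases hval v with h | h | h <;> simp [h]
  rw [sum_congr rfl fun v _ ↦ hpoint v, sum_sub_distrib, sum_add_distrib, ← mul_sum, ← mul_sum,
    sum_boole, sum_boole]
  simp

/-- What remains of the label at `v` when every vertex labeled `2` gives `1` to each vertex of its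
closed neighborhood. It pays `3` for this, even if the neighborhood is smaller, so on graphs of
maximum degree `2` the remainders bound the weight from below. -/
noncomputable def romanSurplus (G : SimpleGraph V) (f : V → ℤ) (v : V) : ℤ :=
  f v - 3 * {u | f u = 2}.indicator 1 v + closedNbhdSum G ({u | f u = 2}.indicator 1) v

lemma one_le_romanSurplus {v : V} (hv : f v = 1) : 1 ≤ romanSurplus G f v := by
  have := closedNbhdSum_nonneg (G := G) (f := {u | f u = 2}.indicator 1)
    (Set.indicator_nonneg (by simp)) v
  simpa [romanSurplus, hv] using this

lemma IsRomanLabeling.romanSurplus_nonneg (hf : IsRomanLabeling G f) (v : V) :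
    0 ≤ romanSurplus G f v := by
  rcases hf.label_mem v with h | h | h
  · obtain ⟨u, hvu, hu⟩ := hf.exists_adj_two v h
    have := one_le_closedNbhdSum_indicator (s := {u | f u = 2}) hu (.inl hvu)
    simpa [romanSurplus, h] using this
  · exact zero_le_one.trans (one_le_romanSurplus h)
  · have := one_le_closedNbhdSum_indicator (G := G) (s := {u | f u = 2}) h (.inr rfl)
    simpa [romanSurplus, h] using this

lemma sum_romanSurplus_le [DecidableRel G.Adj] (hdeg : ∀ v, G.degree v ≤ 2) (f : V → ℤ) :
    ∑ v, romanSurplus G f v ≤ ∑ v, f v := by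
  have hcount := sum_closedNbhdSum_le hdeg (f := {u | f u = 2}.indicator 1)
    (Set.indicator_nonneg (by simp))
  simp only [romanSurplus, sum_add_distrib, sum_sub_distrib, ← mul_sum]
  push_cast at hcount
  linarith

lemma IsRomanLabeling.sum_nonneg [DecidableRel G.Adj] (hf : IsRomanLabeling G f)
    (hdeg : ∀ v, G.degree v ≤ 2) : 0 ≤ ∑ v, f v :=
  (Finset.sum_nonneg fun v _ ↦ hf.romanSurplus_nonneg v).trans (sum_romanSurplus_le hdeg f)

lemma IsRomanLabeling.closedNbhdSum_le_one_of_sum_nonpos [DecidableRel G.Adj]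
    (hf : IsRomanLabeling G f) (hpos : ∀ v, 0 < G.degree v) (hdeg : ∀ v, G.degree v ≤ 2)
    (hsum : ∑ v, f v ≤ 0) (v : V) : closedNbhdSum G f v ≤ 1 := by
  have hzero (u : V) : romanSurplus G f u = 0 := by
    have := single_le_sum (fun w _ ↦ hf.romanSurplus_nonneg w) (mem_univ u)
    linarith [hf.romanSurplus_nonneg u, sum_romanSurplus_le hdeg f]
  set t : V → ℤ := {u | f u = 2}.indicator 1 with ht
  have hlabel (u : V) : f u = 3 * t u - 1 := by
    rcases hf.label_mem u with h | h | h
    · simp [ht, h]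
    · have := one_le_romanSurplus (G := G) h
      have := hzero u
      omega
    · simp [ht, h]
  have hunique : closedNbhdSum G t v = 1 := by
    have := hzero v
    rw [romanSurplus, ← ht, hlabel v] at this
    linarith
  have : closedNbhdSum G f v = 3 * closedNbhdSum G t v - 1 * (G.degree v + 1) := by
    rw [← closedNbhdSum_const_mul_sub_const, ← funext hlabel]
  have := hpos v
  omega

lemma one_le_closedNbhdSum_indicator_pos [DecidableRel G.Adj]
    (hval : ∀ v, f v = -1 ∨ f v = 1 ∨ f v = 2) {v : V} (hpos : 0 < G.degree v)
    (hv : -1 ≤ closedNbhdSum G f v) : 1 ≤ closedNbhdSum G ({u | 0 < f u}.indicator 1) v := by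
  have hle : f ≤ fun u ↦ 3 * {u | 0 < f u}.indicator 1 u - 1 := fun u ↦ by
    rcases hval u with h | h | h <;> simp [h]
  have := closedNbhdSum_mono (G := G) hle v
  rw [closedNbhdSum_const_mul_sub_const] at this
  omega

lemma card_le_mul_card_pos [DecidableRel G.Adj] {d : ℕ}
    (hval : ∀ v, f v = -1 ∨ f v = 1 ∨ f v = 2) (hpos : ∀ v, 0 < G.degree v)
    (hdeg : ∀ v, G.degree v ≤ d) {s : Finset V} (hs : ∀ v ∈ s, -1 ≤ closedNbhdSum G f v) :
    #s ≤ (d + 1) * #{v | 0 < f v} := by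
  set p : V → ℤ := {u | 0 < f u}.indicator 1 with hp
  have hp0 : 0 ≤ p := Set.indicator_nonneg (by simp)
  have hsum : ∑ v, p v = #{v | 0 < f v} := by simp [hp, Set.indicator_apply]
  zify
  calc (#s : ℤ) = ∑ v ∈ s, 1 := by simp
    _ ≤ ∑ v ∈ s, closedNbhdSum G p v :=
      sum_le_sum fun v hv ↦ one_le_closedNbhdSum_indicator_pos hval (hpos v) (hs v hv)
    _ ≤ ∑ v, closedNbhdSum G p v :=
      sum_le_univ_sum_of_nonneg fun v ↦ closedNbhdSum_nonneg hp0 v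
    _ ≤ (d + 1) * #{v | 0 < f v} := hsum ▸ sum_closedNbhdSum_le hdeg hp0

lemma two_mul_card_pos_sub_card_le_sum (hval : ∀ v, f v = -1 ∨ f v = 1 ∨ f v = 2) :
    2 * (#{v | 0 < f v} : ℤ) - Fintype.card V ≤ ∑ v, f v := by
  have hpoint (v : V) : 2 * (if 0 < f v then 1 else 0) - 1 ≤ f v := by
    rcases hval v with h | h | h <;> simp [h]
  calc 2 * (#{v | 0 < f v} : ℤ) - Fintype.card V
      = ∑ v, (2 * (if 0 < f v then 1 else 0) - 1) := by
        rw [sum_sub_distrib, ← mul_sum, sum_boole]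
        simp
    _ ≤ ∑ v, f v := sum_le_sum fun v _ ↦ hpoint v

end Labelings

section Cone

variable {V : Type*} [Fintype V] {H : SimpleGraph V} {f : Fin 1 ⊕ V → ℤ}

/-- The cone `K₁ ∨ H`. Its hub is `Sum.inl 0`. -/
abbrev cone (H : SimpleGraph V) : SimpleGraph (Fin 1 ⊕ V) := join ⊤ H

lemma sum_cone (f : Fin 1 ⊕ V → ℤ) : ∑ v, f v = f (.inl 0) + ∑ v, f (.inr v) := by
  simp [Fintype.sum_sum_type]

lemma closedNbhdSum_cone_hub (f : Fin 1 ⊕ V → ℤ) (a : Fin 1) :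
    closedNbhdSum (cone H) f (.inl a) = ∑ v, f v := by
  rw [closedNbhdSum_join_inl, closedNbhdSum_top, Fintype.sum_sum_type]
  rfl

lemma closedNbhdSum_cone_base (f : Fin 1 ⊕ V → ℤ) (v : V) :
    closedNbhdSum (cone H) f (.inr v) = f (.inl 0) + closedNbhdSum H (f ∘ .inr) v := by
  simp [closedNbhdSum_join_inr]

lemma card_cone : Fintype.card (Fin 1 ⊕ V) = Fintype.card V + 1 := by
  simp [add_comm]

lemma IsMRDF.isRomanLabeling_base (hf : IsMRDF (cone H) f) (hhub : f (.inl 0) ≠ 2) :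
    IsRomanLabeling H (f ∘ .inr) where
  label_mem v := hf.1 (.inr v)
  exists_adj_two v hv := by
    obtain ⟨a | u, hvu, hu⟩ := hf.2.2 (.inr v) hv
    · exact absurd (Subsingleton.elim a 0 ▸ hu) hhub
    · exact ⟨u, join_adj_inr_inr.1 hvu, hu⟩

lemma IsMRDF.card_lt_two_mul_of_sum_nonpos (hf : IsMRDF (cone H) f) (hsum : ∑ v, f v ≤ 0) :
    Fintype.card V < 2 * #{v | 1 ≤ f (.inl 0) + closedNbhdSum H (f ∘ .inr) v} := by
  have hmajority := hf.2.1
  have hhub : ¬ 1 ≤ ∑ v, f v := by omega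
  rw [card_filter, Fintype.sum_sum_type, card_cone] at hmajority
  simp only [closedNbhdSum_cone_hub, closedNbhdSum_cone_base, if_neg hhub] at hmajority
  rw [sum_const_zero, zero_add, ← card_filter] at hmajority
  omega

lemma IsMRDF.le_sum_cone_of_hub_eq_two [DecidableRel H.Adj] (hf : IsMRDF (cone H) f)
    (hpos : ∀ v, 0 < H.degree v) (hdeg : ∀ v, H.degree v ≤ 2) (hhub : f (.inl 0) = 2)
    (hsum : ∑ v, f v ≤ 0) {k : ℕ} (hk : 6 * k ≤ Fintype.card V + 6) :
    2 * (k : ℤ) - Fintype.card V + 2 ≤ ∑ v, f v := by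
  have hval (v : V) := hf.1 (.inr v)
  have hmajority := hf.card_lt_two_mul_of_sum_nonpos hsum
  have hserved := card_le_mul_card_pos (G := H) hval hpos hdeg
    (s := {v | 1 ≤ f (.inl 0) + closedNbhdSum H (f ∘ .inr) v}) fun v hv ↦ by
      have := (mem_filter.1 hv).2
      change -1 ≤ closedNbhdSum H (f ∘ .inr) v
      omega
  have hweight := two_mul_card_pos_sub_card_le_sum hval
  rw [sum_cone, hhub]
  omega

lemma IsMRDF.one_le_sum_base_of_hub_eq_neg_one [DecidableRel H.Adj] (hf : IsMRDF (cone H) f)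
    (hpos : ∀ v, 0 < H.degree v) (hdeg : ∀ v, H.degree v ≤ 2) (hhub : f (.inl 0) = -1)
    (hsum : ∑ v, f v ≤ 0) : 1 ≤ ∑ v, f (.inr v) := by
  have hroman := hf.isRomanLabeling_base (by omega)
  have hmajority := hf.card_lt_two_mul_of_sum_nonpos hsum
  obtain ⟨v, hv⟩ := card_pos.1 (by omega :
    0 < #{v | 1 ≤ f (.inl 0) + closedNbhdSum H (f ∘ .inr) v})
  have hv := (mem_filter.1 hv).2
  by_contra! hbase
  have := hroman.closedNbhdSum_le_one_of_sum_nonpos hpos hdeg (Int.le_of_lt_add_one hbase) v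
  omega

lemma IsMRDF.card_ne_three_of_hub_eq_neg_one (hf : IsMRDF (cone H) f) (hhub : f (.inl 0) = -1)
    (hbase : ∑ v, f (.inr v) = 1) : Fintype.card V ≠ 3 := by
  obtain ⟨a | u, -, hu⟩ := hf.2.2 (.inl 0) hhub
  · rw [Subsingleton.elim a 0] at hu
    omega
  have htwo : 0 < #{v | f (.inr v) = 2} := card_pos.2 ⟨u, by simpa using hu⟩
  have := sum_eq_three_mul_add_two_mul_sub_card fun v ↦ hf.1 (.inr v)
  omega

theorem IsMRDF.le_sum_cone [DecidableRel H.Adj] (hf : IsMRDF (cone H) f)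
    (hpos : ∀ v, 0 < H.degree v) (hdeg : ∀ v, H.degree v ≤ 2) (hcard : 3 ≤ Fintype.card V)
    {k : ℕ} (hk : 6 * k ≤ Fintype.card V + 6) :
    2 * (k : ℤ) - Fintype.card V + 2 ≤ ∑ v, f v := by
  rcases lt_or_ge 0 (∑ v, f v) with hsum | hsum
  · omega
  by_cases htwo : f (.inl 0) = 2
  · exact hf.le_sum_cone_of_hub_eq_two hpos hdeg htwo hsum hk
  have hbase : 0 ≤ ∑ v, f (.inr v) := (hf.isRomanLabeling_base htwo).sum_nonneg hdeg
  have hsplit := sum_cone f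
  have hneg : f (.inl 0) = -1 := by
    have := hf.1 (.inl 0)
    omega
  have hone := hf.one_le_sum_base_of_hub_eq_neg_one hpos hdeg hneg hsum
  have hthree := hf.card_ne_three_of_hub_eq_neg_one hneg (by omega)
  omega

/-- The labeling of the cone `K₁ ∨ H` by `2` on the hub, `1` on `s` and `-1` elsewhere, which
attains the minimum weight when `H` is a path and `s` is suitable. -/
noncomputable def coneLabeling (s : Finset V) : Fin 1 ⊕ V → ℤ :=
  Sum.elim (fun _ ↦ 2) fun v ↦ 2 * (s : Set V).indicator 1 v - 1

lemma sum_coneLabeling (s : Finset V) :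
    ∑ v, coneLabeling s v = 2 * (#s : ℤ) - Fintype.card V + 2 := by
  have : ∑ v, (s : Set V).indicator (1 : V → ℤ) v = #s := by
    classical simp [Set.indicator_apply]
  rw [sum_cone]
  simp [coneLabeling, ← mul_sum, this]
  ring

theorem isMRDF_coneLabeling [DecidableRel H.Adj] (hdeg : ∀ v, H.degree v ≤ 2) {s D : Finset V}
    (hdom : ∀ v ∈ D, ∃ u ∈ s, H.Adj v u ∨ u = v) (hD : Fintype.card V + 1 ≤ 2 * #D) :
    IsMRDF (cone H) (coneLabeling s) := by
  have hserved (v : V) (hv : v ∈ D) : 1 ≤ closedNbhdSum (cone H) (coneLabeling s) (.inr v) := by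
    obtain ⟨u, hu, hvu⟩ := hdom v hv
    have hcount := one_le_closedNbhdSum_indicator (mem_coe.2 hu) hvu
    have hbase := closedNbhdSum_const_mul_sub_const (G := H) 2 1 ((s : Set V).indicator 1) v
    have := hdeg v
    rw [closedNbhdSum_cone_base]
    change 1 ≤ 2 + closedNbhdSum H (fun v ↦ 2 * (s : Set V).indicator 1 v - 1) v
    omega
  refine ⟨?_, ?_, ?_⟩
  · rintro (a | v)
    · exact .inr (.inr rfl)
    · by_cases hv : v ∈ s <;> simp [coneLabeling, hv]
  · rw [card_cone]
    refine hD.trans (Nat.mul_le_mul_left 2 ?_)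
    rw [← card_map (Function.Embedding.inr (α := Fin 1))]
    exact card_le_card fun w hw ↦ by
      obtain ⟨v, hv, rfl⟩ := mem_map.1 hw
      simpa using hserved v hv
  · rintro (a | v) h
    · simp [coneLabeling] at h
    · exact ⟨.inl 0, join_adj_inr_inl v 0, rfl⟩

end Cone

section Path

variable {m k : ℕ}

lemma degree_pathGraph_pos (hm : 2 ≤ m) (i : Fin m) [Fintype ((pathGraph m).neighborSet i)] :
    0 < (pathGraph m).degree i :=
  have : Nontrivial (Fin m) := Fin.nontrivial_iff_two_le.2 hm
  (pathGraph_preconnected m).degree_pos_of_nontrivial i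

lemma degree_pathGraph_le_two (i : Fin m) [Fintype ((pathGraph m).neighborSet i)] :
    (pathGraph m).degree i ≤ 2 := by
  have hsub : ((pathGraph m).neighborFinset i).map Fin.valEmbedding ⊆ {(i : ℕ) - 1, (i : ℕ) + 1} :=
    fun _ hmem ↦ by
      obtain ⟨j, hj, rfl⟩ := mem_map.1 hmem
      rw [mem_neighborFinset, pathGraph_adj] at hj
      simp only [Fin.valEmbedding_apply, mem_insert, mem_singleton]
      omega
  rw [← card_neighborFinset_eq_degree, ← card_map Fin.valEmbedding]
  exact (card_le_card hsub).trans card_le_two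

lemma exists_dominated_pathGraph (hk : 3 * k ≤ m) :
    ∃ s D : Finset (Fin m), #s = k ∧ #D = 3 * k ∧
      ∀ i ∈ D, ∃ j ∈ s, (pathGraph m).Adj i j ∨ j = i := by
  let center (j : Fin k) : Fin m := ⟨3 * j + 1, by omega⟩
  have hcenter : Function.Injective center := fun a b hab ↦ by
    simp only [center, Fin.mk.injEq] at hab
    omega
  refine ⟨univ.map ⟨center, hcenter⟩, univ.map (Fin.castLEEmb hk), by simp, by simp, ?_⟩
  intro i hi
  obtain ⟨i, -, rfl⟩ := mem_map.1 hi
  refine ⟨center ⟨i / 3, by omega⟩, by simp, ?_⟩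
  simp only [pathGraph_adj, Fin.ext_iff, center, Fin.castLEEmb_apply, Fin.val_castLE]
  omega

end Path

lemma exists_ceil_div_eq_natCast (n : ℕ) {d : ℕ} (hd : 0 < d) :
    ∃ k : ℕ, ⌈(n : ℚ) / d⌉ = k ∧ n ≤ d * k ∧ d * k < n + d := by
  have hd' : (0 : ℚ) < d := by exact_mod_cast hd
  have hnonneg : (0 : ℚ) ≤ n / d := by positivity
  have hle := (div_le_iff₀' hd').1 (Nat.le_ceil ((n : ℚ) / d))
  have hlt := mul_lt_mul_of_pos_left (Nat.ceil_lt_add_one hnonneg) hd'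
  rw [mul_add, mul_div_cancel₀ _ hd'.ne', mul_one] at hlt
  exact ⟨_, (Int.natCast_ceil_eq_ceil hnonneg).symm, by exact_mod_cast hle, by exact_mod_cast hlt⟩

end MRD

/-- For `n ≥ 4`, the fan `F_n = K_1 ∨ P_{n-1}` satisfies
`γ_MR(F_n) = 2⌈n/6⌉ - n + 3`. -/
theorem mrdNum_fan (n : ℕ) (hn : 4 ≤ n) :
    MRD.mrdNum (MRD.join (⊤ : SimpleGraph (Fin 1)) (SimpleGraph.pathGraph (n - 1))) =
      2 * ⌈(n : ℚ) / 6⌉ - n + 3 := by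
  classical
  obtain ⟨m, rfl⟩ : ∃ m, n = m + 1 := ⟨n - 1, by omega⟩
  have hpos (i : Fin m) := MRD.degree_pathGraph_pos (by omega) i
  have hdeg (i : Fin m) := MRD.degree_pathGraph_le_two i
  obtain ⟨k, hk, hle, hlt⟩ := MRD.exists_ceil_div_eq_natCast (m + 1) (d := 6) (by omega)
  obtain ⟨s, D, hs, hD, hdom⟩ := MRD.exists_dominated_pathGraph (m := m) (k := k) (by omega)
  rw [Nat.cast_ofNat] at hk
  rw [hk, Nat.add_sub_cancel]
  refine IsLeast.csInf_eq ⟨⟨MRD.coneLabeling s, ?_, ?_⟩, ?_⟩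
  · exact MRD.isMRDF_coneLabeling hdeg hdom (by rw [Fintype.card_fin]; omega)
  · rw [MRD.sum_coneLabeling, hs, Fintype.card_fin]
    push_cast
    ring
  · rintro _ ⟨f, hf, rfl⟩
    have := MRD.IsMRDF.le_sum_cone hf hpos hdeg (k := k)
      (by rw [Fintype.card_fin]; omega) (by rw [Fintype.card_fin]; omega)
    rw [Fintype.card_fin] at this
    omega
end

section
/- Let n ≥ 3 and let G = K_{2n} − M be the graph obtained from the complete graph K_{2n} by deleting the edges of a perfect matching M (the cocktail party graph: every two distinct vertices are adjacent except matched pairs). Then γ_MR(G) = 0. -/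
open Finset

/-!
In `K_{2n} - M` the closed neighborhood of `v` misses only the vertex matched to `v`. Hence a vertex
with `f(N[v]) ≥ 1` forces the total weight to be at least `1 - 1 = 0`. Conversely, if the weight is
`0`, then `f(N[v]) ≥ 1` says that the vertex matched to `v` has value `-1`, and a zero-sum function
with values in `{-1, 1, 2}` takes the value `-1` at least half of the time. So any zero-sum function
satisfying the Roman condition (ii) is optimal, and such a function exists once there are three pairs.
-/

namespace MRD

lemma card_le_two_mul_card_eq_neg_one {ι : Type*} [Fintype ι] {f : ι → ℤ}
    (hf : ∀ i, f i = -1 ∨ 1 ≤ f i) (hsum : ∑ i, f i ≤ 0) :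
    Fintype.card ι ≤ 2 * #{i | f i = -1} := by
  have hpoint (i : ι) : 1 - 2 * (if f i = -1 then 1 else 0) ≤ f i := by
    split_ifs <;> grind
  have hweight : (Fintype.card ι : ℤ) - 2 * #{i | f i = -1} ≤ ∑ i, f i := calc
    (Fintype.card ι : ℤ) - 2 * #{i | f i = -1}
      = ∑ i, (1 - 2 * (if f i = -1 then 1 else 0)) := by
        rw [sum_sub_distrib, ← mul_sum, sum_boole, sum_const, card_univ, nsmul_one]
    _ ≤ ∑ i, f i := sum_le_sum fun i _ => hpoint i
  omega

section Graph

variable {V : Type*} [Fintype V] {G : SimpleGraph V} {f : V → ℤ}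

lemma closedNbhdSum_add_sum_compl_neighborFinset (G : SimpleGraph V) (f : V → ℤ) (v : V)
    [Fintype (Gᶜ.neighborSet v)] :
    closedNbhdSum G f v + ∑ u ∈ Gᶜ.neighborFinset v, f u = ∑ u, f u := by
  classical
  have hcompl : Gᶜ.neighborFinset v = ({u | ¬(G.Adj v u ∨ u = v)} : Finset V) := by
    ext u
    simp [and_comm, eq_comm]
  rw [closedNbhdSum, hcompl]
  convert sum_filter_add_sum_filter_not univ (fun u => G.Adj v u ∨ u = v) f

lemma IsMRDF.exists_one_le_closedNbhdSum [Nonempty V] (hf : IsMRDF G f) :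
    ∃ v, 1 ≤ closedNbhdSum G f v := by
  by_contra! hlt
  have hhalf := hf.2.1
  simp [fun v => not_le.mpr (hlt v)] at hhalf

lemma IsMRDF.one_sub_maxDegree_compl_le_sum [Nonempty V] [DecidableRel Gᶜ.Adj]
    (hf : IsMRDF G f) : 1 - (Gᶜ.maxDegree : ℤ) ≤ ∑ v, f v := by
  obtain ⟨v, hv⟩ := hf.exists_one_le_closedNbhdSum
  have hdeg : (Gᶜ.degree v : ℤ) ≤ Gᶜ.maxDegree := mod_cast Gᶜ.degree_le_maxDegree v
  have hmissed : -(Gᶜ.degree v : ℤ) ≤ ∑ u ∈ Gᶜ.neighborFinset v, f u := by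
    have hge (u : V) : -1 ≤ f u := by rcases hf.1 u with h | h | h <;> omega
    simpa using card_nsmul_le_sum (Gᶜ.neighborFinset v) f (-1) fun u _ => hge u
  linarith [closedNbhdSum_add_sum_compl_neighborFinset G f v]

lemma closedNbhdSum_of_compl_adj_iff {v w : V} (hvw : ∀ u, Gᶜ.Adj v u ↔ u = w) :
    closedNbhdSum G f v = ∑ u, f u - f w := by
  classical
  have hmissed : Gᶜ.neighborFinset v = {w} := by
    ext u
    rw [SimpleGraph.mem_neighborFinset, hvw, mem_singleton]
  rw [← closedNbhdSum_add_sum_compl_neighborFinset G f v, hmissed, sum_singleton,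
    add_sub_cancel_right]

lemma isMRDF_of_sum_eq_zero {σ : Equiv.Perm V} (hσ : ∀ v u, Gᶜ.Adj v u ↔ u = σ v)
    (hval : ∀ v, f v = -1 ∨ f v = 1 ∨ f v = 2) (hsum : ∑ v, f v = 0)
    (hroman : ∀ u, f u = -1 → ∃ w, G.Adj u w ∧ f w = 2) : IsMRDF G f := by
  have hnbhd (v : V) : 1 ≤ closedNbhdSum G f v ↔ f (σ v) = -1 := by
    rw [closedNbhdSum_of_compl_adj_iff (hσ v), hsum]
    rcases hval (σ v) with h | h | h <;> omega
  have hhalf : Fintype.card V ≤ 2 * #{v | f (σ v) = -1} :=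
    card_le_two_mul_card_eq_neg_one (fun v => (hval (σ v)).imp_right (by omega))
      ((Equiv.sum_comp σ f).trans hsum).le
  refine ⟨hval, ?_, hroman⟩
  simp only [hnbhd]
  convert hhalf

end Graph

section Cocktail

variable {n : ℕ}

/-- The perfect matching `M` deleted from `K_{2n}`, as the permutation sending each vertex to the
one matched to it. -/
def cocktailMatching (n : ℕ) : Equiv.Perm (Fin n × Fin 2) :=
  (Equiv.refl (Fin n)).prodCongr Fin.revPerm

lemma cocktail_compl_adj {v u : Fin n × Fin 2} :
    (cocktail n)ᶜ.Adj v u ↔ u = cocktailMatching n v := by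
  obtain ⟨i, a⟩ := v
  obtain ⟨j, b⟩ := u
  fin_cases a <;> fin_cases b <;> simp [cocktail, cocktailMatching, eq_comm]

lemma cocktail_compl_isRegularOfDegree [DecidableRel (cocktail n)ᶜ.Adj] :
    (cocktail n)ᶜ.IsRegularOfDegree 1 := by
  intro v
  rw [SimpleGraph.degree_eq_one_iff_existsUnique_adj]
  exact ⟨cocktailMatching n v, cocktail_compl_adj.mpr rfl, fun _ => cocktail_compl_adj.mp⟩

/-- An MRDF of minimum weight on `cocktail (k + 3)`: the pairs `0`, `1`, `2` get the values `(2, 2)`,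
`(-1, -1)`, `(-1, -1)`, every other pair gets `(1, -1)`. Indexing by `k + 3` lets `Fin.sum_univ_succ`
split off the three special pairs. -/
def cocktailMRDF (k : ℕ) (v : Fin (k + 3) × Fin 2) : ℤ :=
  if v.1.val = 0 then 2 else if v.1.val ≤ 2 then -1 else if v.2 = 0 then 1 else -1

lemma sum_cocktailMRDF (k : ℕ) : ∑ v, cocktailMRDF k v = 0 := by
  simp [Fintype.sum_prod_type, Fin.sum_univ_succ, cocktailMRDF]

lemma isMRDF_cocktailMRDF (k : ℕ) : IsMRDF (cocktail (k + 3)) (cocktailMRDF k) := by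
  refine isMRDF_of_sum_eq_zero (fun _ _ => cocktail_compl_adj) ?values (sum_cocktailMRDF k) ?roman
  case values =>
    intro v
    unfold cocktailMRDF
    split_ifs <;> simp
  case roman =>
    intro u hu
    have hne : u.1 ≠ 0 := fun h => by simp [cocktailMRDF, h] at hu
    exact ⟨(0, 0), hne, by simp [cocktailMRDF]⟩

lemma IsMRDF.sum_nonneg_of_cocktail [NeZero n] {f : Fin n × Fin 2 → ℤ}
    (hf : IsMRDF (cocktail n) f) : 0 ≤ ∑ v, f v := by
  classical
  simpa [cocktail_compl_isRegularOfDegree.maxDegree_eq] using hf.one_sub_maxDegree_compl_le_sum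

end Cocktail

end MRD

/-- For `n ≥ 3`, the cocktail party graph `K_{2n} - M` (complete graph minus a
perfect matching) satisfies `γ_MR(K_{2n} - M) = 0`. -/
theorem mrdNum_cocktail (n : ℕ) (hn : 3 ≤ n) :
    MRD.mrdNum (MRD.cocktail n) = 0 := by
  obtain ⟨k, rfl⟩ := Nat.exists_eq_add_of_le' hn
  refine IsLeast.csInf_eq ⟨⟨MRD.cocktailMRDF k, MRD.isMRDF_cocktailMRDF k,
    (MRD.sum_cocktailMRDF k).symm⟩, ?_⟩
  rintro _ ⟨f, hf, rfl⟩
  exact hf.sum_nonneg_of_cocktail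
end

section
/- Let T be a tree of order n ≥ 2. Suppose there exists a dominating set S of T of minimum cardinality γ(T) such that V(T) \ S is an independent set. Then γ_MR(T) ≤ 3γ(T) − n. -/
open Finset

/-!
Give weight `2` to the vertices of `S` and `-1` to all others; the total is `3 * #S - n`, and every
vertex of weight `-1` sees a `2` because `S` dominates. Let `W` be the set of vertices all of whose
neighbors lie in `S`. The closed neighborhood sum is at least `1` on `W`: at most the vertex itself
contributes `-1`, and then domination supplies a neighbor contributing `2`. Since `Sᶜ` is
independent, it is contained in `W`, and a vertex outside `W` has a neighbor in `Sᶜ ⊆ W`, so `W`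
dominates as well. Minimality of `S` now gives `#S ≤ #W`, hence `n = #S + #Sᶜ ≤ 2 * #W`.
-/

namespace MRD

section Label

variable {V : Type*}

open Classical in
/-- The labelling with value `2` on `S` and `-1` elsewhere; it satisfies the Roman condition
exactly when `S` is dominating. -/
noncomputable def romanLabel (S : Finset V) (v : V) : ℤ :=
  if v ∈ S then 2 else -1

lemma romanLabel_of_mem {S : Finset V} {v : V} (hv : v ∈ S) : romanLabel S v = 2 :=
  if_pos hv

lemma romanLabel_eq_neg_one_iff {S : Finset V} {v : V} : romanLabel S v = -1 ↔ v ∉ S := by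
  simp [romanLabel]

lemma sum_romanLabel [Fintype V] (S : Finset V) :
    ∑ v, romanLabel S v = 3 * (#S : ℤ) - Fintype.card V := by
  classical
  have hshift (v : V) : romanLabel S v = (if v ∈ S then 3 else 0) - 1 := by
    unfold romanLabel
    split_ifs <;> norm_num
  calc ∑ v, romanLabel S v = ∑ v, ((if v ∈ S then 3 else 0) - 1 : ℤ) :=
        sum_congr rfl fun v _ => hshift v
    _ = 3 * (#S : ℤ) - Fintype.card V := by simp [mul_comm]

end Label

variable {V : Type*} [Fintype V] {G : SimpleGraph V} {S : Finset V}

lemma IsDomSet.domNum_le_card (hS : IsDomSet G S) : domNum G ≤ #S :=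
  Nat.sInf_le ⟨S, hS, rfl⟩

lemma IsMRDF.neg_one_le {f : V → ℤ} (hf : IsMRDF G f) (v : V) : -1 ≤ f v := by
  have := hf.1 v
  lia

lemma IsMRDF.mrdNum_le_sum {f : V → ℤ} (hf : IsMRDF G f) : mrdNum G ≤ ∑ v, f v := by
  refine csInf_le ⟨∑ _v : V, -1, ?_⟩ ⟨f, hf, rfl⟩
  rintro _ ⟨g, hg, rfl⟩
  exact sum_le_sum fun v _ => hg.neg_one_le v

lemma closedNbhdSum_eq_add_sum_neighborFinset (G : SimpleGraph V) (f : V → ℤ) (v : V)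
    [Fintype (G.neighborSet v)] :
    closedNbhdSum G f v = f v + ∑ u ∈ G.neighborFinset v, f u := by
  classical
  have hinsert : univ.filter (fun u => G.Adj v u ∨ u = v) = insert v (G.neighborFinset v) := by
    ext u
    simp [or_comm]
  rw [closedNbhdSum, hinsert, sum_insert (by simp)]

open Classical in
/-- The set of vertices of `G` all of whose neighbors lie in `S`; the closed neighborhood
condition for `romanLabel S` is verified at these vertices. Isolated vertices belong to it. -/
noncomputable def nbhdInside (G : SimpleGraph V) (S : Finset V) : Finset V :=
  {v | ∀ u, G.Adj v u → u ∈ S}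

lemma mem_nbhdInside {v : V} : v ∈ nbhdInside G S ↔ ∀ u, G.Adj v u → u ∈ S := by
  simp [nbhdInside]

lemma compl_subset_nbhdInside [DecidableEq V] (hind : ∀ a ∉ S, ∀ b ∉ S, ¬ G.Adj a b) :
    Sᶜ ⊆ nbhdInside G S := fun v hv =>
  mem_nbhdInside.2 fun u hvu => by_contra fun hu => hind v (mem_compl.1 hv) u hu hvu

lemma isDomSet_nbhdInside (hind : ∀ a ∉ S, ∀ b ∉ S, ¬ G.Adj a b) :
    IsDomSet G (nbhdInside G S) := by
  classical
  intro v hv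
  obtain ⟨u, hvu, hu⟩ : ∃ u, G.Adj v u ∧ u ∉ S := by simpa [mem_nbhdInside] using hv
  exact ⟨u, compl_subset_nbhdInside hind (mem_compl.2 hu), hvu⟩

lemma card_le_two_mul_card_nbhdInside (hmin : #S ≤ domNum G)
    (hind : ∀ a ∉ S, ∀ b ∉ S, ¬ G.Adj a b) :
    Fintype.card V ≤ 2 * #(nbhdInside G S) := by
  classical
  calc Fintype.card V = #S + #Sᶜ := (card_add_card_compl S).symm
    _ ≤ #(nbhdInside G S) + #(nbhdInside G S) :=
      add_le_add (hmin.trans (isDomSet_nbhdInside hind).domNum_le_card)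
        (card_le_card (compl_subset_nbhdInside hind))
    _ = 2 * #(nbhdInside G S) := (two_mul _).symm

lemma IsDomSet.one_le_closedNbhdSum_romanLabel (hS : IsDomSet G S) {v : V}
    (hv : v ∈ nbhdInside G S) : 1 ≤ closedNbhdSum G (romanLabel S) v := by
  classical
  have htwo : ∀ u ∈ G.neighborFinset v, romanLabel S u = 2 := fun u hu =>
    romanLabel_of_mem (mem_nbhdInside.1 hv u ((G.mem_neighborFinset v u).1 hu))
  rw [closedNbhdSum_eq_add_sum_neighborFinset, sum_congr rfl htwo, sum_const, nsmul_eq_mul,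
    G.card_neighborFinset_eq_degree]
  by_cases hvS : v ∈ S
  · rw [romanLabel_of_mem hvS]
    lia
  · obtain ⟨u, -, hvu⟩ := hS v hvS
    have hdeg : 0 < G.degree v := (G.degree_pos_iff_exists_adj v).2 ⟨u, hvu⟩
    rw [romanLabel_eq_neg_one_iff.2 hvS]
    lia

lemma IsDomSet.isMRDF_romanLabel (hS : IsDomSet G S)
    (hcard : Fintype.card V ≤ 2 * #(nbhdInside G S)) : IsMRDF G (romanLabel S) := by
  refine ⟨fun v => ?_, ?_, fun v hv => ?_⟩
  · unfold romanLabel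
    split_ifs <;> simp
  · refine hcard.trans (Nat.mul_le_mul_left 2 (card_le_card fun v hv => ?_))
    exact mem_filter.2 ⟨mem_univ v, hS.one_le_closedNbhdSum_romanLabel hv⟩
  · obtain ⟨w, hw, hvw⟩ := hS v (romanLabel_eq_neg_one_iff.1 hv)
    exact ⟨w, hvw, romanLabel_of_mem hw⟩

end MRD

theorem mrdNum_tree_le_of_domSet_general {V : Type*} [Fintype V] (G : SimpleGraph V)
    (S : Finset V) (hdom : MRD.IsDomSet G S) (hmin : #S = MRD.domNum G)
    (hind : ∀ a ∉ S, ∀ b ∉ S, ¬ G.Adj a b) :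
    MRD.mrdNum G ≤ 3 * (MRD.domNum G : ℤ) - Fintype.card V := by
  have hcard := MRD.card_le_two_mul_card_nbhdInside hmin.le hind
  calc MRD.mrdNum G ≤ ∑ v, MRD.romanLabel S v := (hdom.isMRDF_romanLabel hcard).mrdNum_le_sum
    _ = 3 * (MRD.domNum G : ℤ) - Fintype.card V := by rw [MRD.sum_romanLabel, hmin]

/-- Let `T` be a tree of order `n ≥ 2` admitting a minimum dominating set `S` whose
complement is independent. Then `γ_MR(T) ≤ 3γ(T) - n`. -/
theorem mrdNum_tree_le_of_domSet {V : Type*} [Fintype V] (T : SimpleGraph V)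
    (hT : T.IsTree) (hn : 2 ≤ Fintype.card V) (S : Finset V)
    (hdom : MRD.IsDomSet T S) (hmin : S.card = MRD.domNum T)
    (hind : ∀ a ∉ S, ∀ b ∉ S, ¬ T.Adj a b) :
    MRD.mrdNum T ≤ 3 * (MRD.domNum T : ℤ) - Fintype.card V :=
  mrdNum_tree_le_of_domSet_general T S hdom hmin hind
end
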